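/- Let 0 < m < n be integers, μ, τ > 0, and suppose the polynomial p_{n,m}(r) = r^n + Γ(1 + m/n) r^{n−m} + 1 has n pairwise distinct complex roots r_1, …, r_n, and let G_{m/n} be the Andrade relaxation modulus; write α = m/n. Then lim_{t → +∞} (t/τ)^{2−α} G_{m/n}(t) = μ α (1 − α), i.e., G_{m/n}(t) ≈ μ α(1−α)(t/τ)^{α−2} as t → +∞. -/

import Mathlib

open Filter Set Finset

/-- The two-parameter Mittag–Leffler function
`E_{α,β}(z) = ∑_{k=0}^∞ z^k / Γ(β + αk)`. -/
noncomputable def mittagLeffler (α β : ℝ) (z : ℂ) : ℂ :=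
  ∑' k : ℕ, z ^ k / (Real.Gamma (β + α * k) : ℂ)

/-!
For `|arg z| > π/n`, the function `t ↦ E_{1/n,1}(zt)` and the integral
`∫₀^∞ e^{-(ts)^n} / ((e^{iπ/n} s - z) (e^{-iπ/n} s - z)) ds`, suitably normalised, solve the same
first-order linear differential equation and have the same limit at `0`, hence agree. The
equation then represents `E_{1/n,1/n}(z)` by the same integral with an additional factor `s^n`.

All roots of `p = p_{n,m}` lie in the region `|arg z| > π/n`, and by partial fractions the sum over
the roots in `G_{m/n}` becomes a single integral involving the jump of `1/p` between the rays
`arg = ±π/n`. The powers `r^n` of `p` agree on these rays, so the jump behaves near `0` like a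
multiple of `x^{n-m}`, which fixes the decay rate `α - 2`. Dominated convergence evaluates the
limit as a Gamma integral, and the reflection formula turns the constant into `α (1 - α)`.
-/

section

open MeasureTheory Polynomial
open scoped Topology

/-! ### Mittag–Leffler series -/

theorem rpow_sub_one_mul_exp_neg_le_Gamma {R s : ℝ} (hR : 0 ≤ R) (hs : 1 ≤ s) :
    R ^ (s - 1) * Real.exp (-R) ≤ Real.Gamma s := by
  have hs₀ : 0 < s := one_pos.trans_le hs
  have hexp := (integrableOn_exp_neg_Ioi R).const_mul (R ^ (s - 1))
  have hGamma := Real.GammaIntegral_convergent hs₀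
  have hsub : Set.Ioi R ⊆ Set.Ioi 0 := Set.Ioi_subset_Ioi hR
  calc R ^ (s - 1) * Real.exp (-R)
      = ∫ x in Set.Ioi R, R ^ (s - 1) * Real.exp (-x) := by
        rw [integral_const_mul, integral_exp_neg_Ioi]
    _ ≤ ∫ x in Set.Ioi R, Real.exp (-x) * x ^ (s - 1) := by
        refine setIntegral_mono_on hexp (hGamma.mono_set hsub) measurableSet_Ioi fun x hx => ?_
        rw [mul_comm]
        have hRx : R ≤ x := le_of_lt hx
        gcongr
    _ ≤ ∫ x in Set.Ioi 0, Real.exp (-x) * x ^ (s - 1) := by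
        refine setIntegral_mono_set hGamma ?_ hsub.eventuallyLE
        filter_upwards [ae_restrict_mem measurableSet_Ioi] with x hx
        exact mul_nonneg (Real.exp_pos _).le (Real.rpow_nonneg (le_of_lt hx) _)
    _ = Real.Gamma s := (Real.Gamma_eq_integral hs₀).symm

theorem summable_mittagLeffler {α : ℝ} (hα : 0 < α) (β : ℝ) (z : ℂ) :
    Summable fun k : ℕ => z ^ k / (Real.Gamma (β + α * k) : ℂ) := by
  -- With `R ^ α = 2 ‖z‖ + 1`, the bound on `Γ` makes the terms decay geometrically.
  set R : ℝ := (2 * ‖z‖ + 1) ^ α⁻¹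
  have hR : 0 < R := by positivity
  have hRα : R ^ α = 2 * ‖z‖ + 1 := Real.rpow_inv_rpow (by positivity) hα.ne'
  have hratio : ‖z‖ / (2 * ‖z‖ + 1) < 1 := by
    rw [div_lt_one (by positivity)]
    linarith [norm_nonneg z]
  have hlarge : ∀ᶠ k : ℕ in atTop, 1 ≤ β + α * k :=
    (tendsto_atTop_add_const_left _ β
      (tendsto_natCast_atTop_atTop.const_mul_atTop hα)).eventually_ge_atTop 1
  refine Summable.of_norm_bounded_eventually_nat
    ((summable_geometric_of_lt_one (by positivity) hratio).mul_left
      (R ^ (β - 1) * Real.exp (-R))⁻¹) ?_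
  filter_upwards [hlarge] with k hk
  have hpow : R ^ (β + α * k - 1) = R ^ (β - 1) * (2 * ‖z‖ + 1) ^ k := by
    rw [← hRα, ← Real.rpow_natCast, ← Real.rpow_mul hR.le, ← Real.rpow_add hR]
    ring_nf
  calc ‖z ^ k / (Real.Gamma (β + α * k) : ℂ)‖
      = ‖z‖ ^ k / Real.Gamma (β + α * k) := by
        rw [norm_div, norm_pow, Complex.norm_real,
          Real.norm_of_nonneg (Real.Gamma_pos_of_pos (one_pos.trans_le hk)).le]
    _ ≤ ‖z‖ ^ k / (R ^ (β + α * k - 1) * Real.exp (-R)) := by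
        gcongr
        exact rpow_sub_one_mul_exp_neg_le_Gamma hR.le hk
    _ = (R ^ (β - 1) * Real.exp (-R))⁻¹ * (‖z‖ / (2 * ‖z‖ + 1)) ^ k := by
        rw [hpow, div_pow]
        field_simp

theorem mittagLeffler_eq_sum_add {α : ℝ} (hα : 0 < α) (β : ℝ) (N : ℕ) (z : ℂ) :
    mittagLeffler α β z =
      ∑ k ∈ Finset.range N, z ^ k / (Real.Gamma (β + α * k) : ℂ) +
        z ^ N * mittagLeffler α (β + α * N) z := by
  rw [mittagLeffler, ← (summable_mittagLeffler hα β z).sum_add_tsum_nat_add N, mittagLeffler,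
    ← tsum_mul_left]
  congr 1
  refine tsum_congr fun k => ?_
  rw [pow_add, mul_comm (z ^ k), mul_div_assoc, Nat.cast_add]
  ring_nf

theorem mittagLeffler_zero (α β : ℝ) : mittagLeffler α β 0 = (Real.Gamma β : ℂ)⁻¹ := by
  rw [mittagLeffler, tsum_eq_single 0 fun k hk => by simp [hk]]
  simp

theorem deriv_pow_succ_div_Gamma {α : ℝ} (hα : 0 < α) (k : ℕ) (z : ℂ) :
    deriv (fun w : ℂ => w ^ (k + 1) / (Real.Gamma (1 + α * (k + 1 : ℕ)) : ℂ)) z =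
      z ^ k / (Real.Gamma (α + α * k) : ℂ) / α := by
  have hpos : 0 < α + α * k := by positivity
  have hGamma : Real.Gamma (1 + α * (k + 1 : ℕ)) = (α + α * k) * Real.Gamma (α + α * k) := by
    rw [← Real.Gamma_add_one hpos.ne']
    push_cast
    ring_nf
  have hk : (k : ℂ) + 1 ≠ 0 := by exact_mod_cast k.succ_ne_zero
  rw [deriv_div_const, deriv_pow_field, hGamma]
  push_cast
  rw [show (α : ℂ) + α * k = α * (k + 1) by ring]
  field_simp

theorem hasDerivAt_mittagLeffler_one {α : ℝ} (hα : 0 < α) (z : ℂ) :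
    HasDerivAt (mittagLeffler α 1) (mittagLeffler α α z / α) z := by
  set R : ℝ := ‖z‖ + 1
  have hz : z ∈ Metric.ball (0 : ℂ) R := by simp [R]
  have hsum : Summable fun k : ℕ => ‖(R : ℂ) ^ k / (Real.Gamma (1 + α * k) : ℂ)‖ :=
    (summable_mittagLeffler hα 1 R).norm
  have hdiff (k : ℕ) : Differentiable ℂ fun w : ℂ => w ^ k / (Real.Gamma (1 + α * k) : ℂ) := by
    fun_prop
  have hbound (k : ℕ) (w : ℂ) (hw : w ∈ Metric.ball (0 : ℂ) R) :
      ‖w ^ k / (Real.Gamma (1 + α * k) : ℂ)‖ ≤ ‖(R : ℂ) ^ k / (Real.Gamma (1 + α * k) : ℂ)‖ := by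
    have hwR : ‖w‖ ≤ ‖(R : ℂ)‖ := by
      rw [Complex.norm_of_nonneg (by positivity)]
      exact (mem_ball_zero_iff.1 hw).le
    rw [norm_div, norm_div, norm_pow, norm_pow]
    gcongr
  have hderiv := Complex.hasSum_deriv_of_summable_norm hsum
    (fun k => (hdiff k).differentiableOn) Metric.isOpen_ball hbound hz
  have hvalue : deriv (mittagLeffler α 1) z = mittagLeffler α α z / α := by
    calc deriv (mittagLeffler α 1) z
        = ∑' k : ℕ, deriv (fun w : ℂ => w ^ k / (Real.Gamma (1 + α * k) : ℂ)) z :=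
          hderiv.tsum_eq.symm
      _ = ∑' k : ℕ, z ^ k / (Real.Gamma (α + α * k) : ℂ) / α := by
          rw [hderiv.summable.tsum_eq_zero_add, tsum_congr (deriv_pow_succ_div_Gamma hα · z)]
          simp
      _ = mittagLeffler α α z / α := tsum_div_const
  rw [← hvalue]
  exact ((Complex.differentiableOn_tsum_of_summable_norm hsum
    (fun k => (hdiff k).differentiableOn) Metric.isOpen_ball hbound).differentiableAt
      (Metric.isOpen_ball.mem_nhds hz)).hasDerivAt

/-! ### The reciprocal of a quadratic with no nonnegative root -/

theorem tendsto_ofReal_inv_add_atTop (c : ℂ) :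
    Tendsto (fun s : ℝ => (s : ℂ)⁻¹ + c) atTop (𝓝 c) := by
  have hinv : Tendsto (fun s : ℝ => (s : ℂ)⁻¹) atTop (𝓝 0) :=
    tendsto_inv₀_cobounded.comp (RCLike.tendsto_ofReal_atTop_cobounded ℂ)
  simpa using hinv.add_const c

theorem one_add_ofReal_mul_mem_slitPlane {a : ℂ} (ha : a ∈ Complex.slitPlane) {s : ℝ}
    (hs : 0 ≤ s) : 1 + s * a ∈ Complex.slitPlane := by
  rcases hs.eq_or_lt with rfl | hs
  · simp
  rcases Complex.mem_slitPlane_iff.1 ha with hre | him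
  · left
    simp only [Complex.add_re, Complex.one_re, Complex.re_ofReal_mul]
    positivity
  · right
    simpa using ⟨hs.ne', him⟩

theorem integrableOn_inv_one_add_mul_mul_one_add_mul {a b : ℂ} (ha : a ∈ Complex.slitPlane)
    (hb : b ∈ Complex.slitPlane) :
    IntegrableOn (fun s : ℝ => ((1 + s * a) * (1 + s * b))⁻¹) (Set.Ioi 0) := by
  have hcont : ContinuousOn (fun s : ℝ => ((1 + s * a) * (1 + s * b))⁻¹) (Set.Ici 0) :=
    ContinuousOn.inv₀ (by fun_prop) fun s hs => mul_ne_zero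
      (Complex.slitPlane_ne_zero (one_add_ofReal_mul_mem_slitPlane ha hs))
      (Complex.slitPlane_ne_zero (one_add_ofReal_mul_mem_slitPlane hb hs))
  have hquot : Tendsto (fun s : ℝ => ((1 + s * a) * (1 + s * b))⁻¹ / (s ^ (-2 : ℝ) : ℝ)) atTop
      (𝓝 (a * b)⁻¹) := by
    refine (((tendsto_ofReal_inv_add_atTop a).mul (tendsto_ofReal_inv_add_atTop b)).inv₀
      (mul_ne_zero (Complex.slitPlane_ne_zero ha) (Complex.slitPlane_ne_zero hb))).congr' ?_
    filter_upwards [eventually_gt_atTop 0] with s hs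
    have hs' : (s : ℂ) ≠ 0 := by exact_mod_cast hs.ne'
    rw [Real.rpow_neg hs.le, Real.rpow_two, Complex.ofReal_inv, div_inv_eq_mul, ← inv_inv
      ((s ^ 2 : ℝ) : ℂ), ← mul_inv]
    congr 1
    push_cast
    field_simp
  have hbigO : (fun s : ℝ => ((1 + s * a) * (1 + s * b))⁻¹) =O[atTop]
      fun s : ℝ => s ^ (-2 : ℝ) := by
    refine Complex.isBigO_ofReal_right.1 (Asymptotics.isBigO_of_div_tendsto_nhds ?_ _ hquot)
    filter_upwards [eventually_gt_atTop 0] with s hs h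
    exact absurd (Complex.ofReal_eq_zero.1 h) (Real.rpow_pos_of_pos hs _).ne'
  refine ((hcont.locallyIntegrableOn measurableSet_Ici).integrableOn_of_isBigO_atTop hbigO
    ⟨Set.Ioi 1, Ioi_mem_atTop 1, integrableOn_Ioi_rpow_of_lt (by norm_num) one_pos⟩).mono_set
      Set.Ioi_subset_Ici_self

theorem tendsto_log_one_add_mul_sub_log_one_add_mul {a b : ℂ} (ha : a ∈ Complex.slitPlane)
    (hb : b ∈ Complex.slitPlane) :
    Tendsto (fun s : ℝ => Complex.log (1 + s * a) - Complex.log (1 + s * b)) atTop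
      (𝓝 (Complex.log a - Complex.log b)) := by
  have hlog {c : ℂ} (hc : c ∈ Complex.slitPlane) :
      Tendsto (fun s : ℝ => Complex.log ((s : ℂ)⁻¹ + c)) atTop (𝓝 (Complex.log c)) :=
    (tendsto_ofReal_inv_add_atTop c).clog hc
  have hsplit {c : ℂ} (hc : c ∈ Complex.slitPlane) {s : ℝ} (hs : 0 < s) :
      Complex.log (1 + s * c) = Real.log s + Complex.log ((s : ℂ)⁻¹ + c) := by
    have hs' : (s : ℂ) ≠ 0 := by exact_mod_cast hs.ne'
    have hfactor : 1 + s * c = s * ((s : ℂ)⁻¹ + c) := by field_simp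
    have hne : (s : ℂ)⁻¹ + c ≠ 0 := fun h =>
      Complex.slitPlane_ne_zero (one_add_ofReal_mul_mem_slitPlane hc hs.le) (by
        rw [hfactor, h, mul_zero])
    rw [hfactor, Complex.log_ofReal_mul hs hne]
  refine ((hlog ha).sub (hlog hb)).congr' ?_
  filter_upwards [eventually_gt_atTop 0] with s hs
  rw [hsplit ha hs, hsplit hb hs]
  ring

theorem integral_inv_one_add_mul_mul_one_add_mul {a b : ℂ} (ha : a ∈ Complex.slitPlane)
    (hb : b ∈ Complex.slitPlane) :
    (a - b) * ∫ s : ℝ in Set.Ioi 0, ((1 + s * a) * (1 + s * b))⁻¹ =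
      Complex.log a - Complex.log b := by
  have hlog {c : ℂ} (hc : c ∈ Complex.slitPlane) {s : ℝ} (hs : 0 ≤ s) :
      HasDerivAt (fun s : ℝ => Complex.log (1 + s * c)) (c / (1 + s * c)) s := by
    have hlin : HasDerivAt (fun s : ℝ => 1 + (s : ℂ) * c) c s := by
      simpa using ((Complex.ofRealCLM.hasDerivAt (x := s)).mul_const c).const_add 1
    exact hlin.clog_real (one_add_ofReal_mul_mem_slitPlane hc hs)
  have hderiv (s : ℝ) (hs : s ∈ Set.Ici 0) :
      HasDerivAt (fun s : ℝ => Complex.log (1 + s * a) - Complex.log (1 + s * b))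
        ((a - b) * ((1 + s * a) * (1 + s * b))⁻¹) s := by
    refine ((hlog ha hs).sub (hlog hb hs)).congr_deriv ?_
    have ha' := Complex.slitPlane_ne_zero (one_add_ofReal_mul_mem_slitPlane ha hs)
    have hb' := Complex.slitPlane_ne_zero (one_add_ofReal_mul_mem_slitPlane hb hs)
    rw [div_sub_div _ _ ha' hb', ← div_eq_mul_inv]
    ring
  rw [← integral_const_mul, integral_Ioi_of_hasDerivAt_of_tendsto' hderiv
    ((integrableOn_inv_one_add_mul_mul_one_add_mul ha hb).const_mul (a - b))
    (tendsto_log_one_add_mul_sub_log_one_add_mul ha hb)]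
  simp

theorem log_exp_ofReal_mul_I_mul {φ : ℝ} {w : ℂ} (hw : w ≠ 0) (hφ : |φ| + |w.arg| < Real.pi) :
    Complex.log (Complex.exp (φ * Complex.I) * w) = φ * Complex.I + Complex.log w := by
  obtain ⟨hlo, hhi⟩ := abs_lt.1 ((abs_add_le φ w.arg).trans_lt hφ)
  obtain ⟨hφlo, hφhi⟩ := abs_lt.1 ((le_add_of_nonneg_right (abs_nonneg w.arg)).trans_lt hφ)
  have harg : (Complex.exp (φ * Complex.I)).arg = φ := by
    rw [Complex.arg_exp_mul_I, toIocMod_eq_self]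
    exact ⟨hφlo, by linarith⟩
  rw [(Complex.log_mul_eq_add_log_iff (Complex.exp_ne_zero _) hw).2 (by
    rw [harg]
    exact ⟨hlo, hhi.le⟩), Complex.log_exp (by simpa using hφlo) (by simpa using hφhi.le)]

theorem exp_ofReal_mul_I_mul_mem_slitPlane {φ : ℝ} {w : ℂ} (hw : w ≠ 0)
    (hφ : |φ| + |w.arg| < Real.pi) : Complex.exp (φ * Complex.I) * w ∈ Complex.slitPlane := by
  refine Complex.mem_slitPlane_iff_arg.2 ⟨?_, mul_ne_zero (Complex.exp_ne_zero _) hw⟩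
  have harg := congrArg Complex.im (log_exp_ofReal_mul_I_mul hw hφ)
  rw [Complex.log_im] at harg
  rw [harg]
  have := (abs_add_le φ w.arg).trans_lt hφ
  simpa [Complex.log_im] using (abs_lt.1 this).2.ne

theorem abs_arg_neg {z : ℂ} (hz : z ≠ 0) : |(-z).arg| = Real.pi - |z.arg| := by
  rw [← Complex.angle_one_left (neg_ne_zero.2 hz), InnerProductGeometry.angle_neg_right,
    Complex.angle_one_left hz]

theorem ne_zero_of_lt_abs_arg {φ : ℝ} {z : ℂ} (hφ : |φ| < |z.arg|) : z ≠ 0 := by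
  rintro rfl
  rw [Complex.arg_zero, abs_zero] at hφ
  exact (abs_nonneg φ).not_gt hφ

theorem abs_add_abs_arg_neg_inv_lt_pi {φ : ℝ} {z : ℂ} (hφ : |φ| < |z.arg|) :
    |φ| + |(-z⁻¹).arg| < Real.pi := by
  rw [abs_arg_neg (inv_ne_zero (ne_zero_of_lt_abs_arg hφ)), Complex.abs_arg_inv]
  linarith

theorem neg_exp_mul_I_div_mem_slitPlane {φ : ℝ} {z : ℂ} (hφ : |φ| < |z.arg|) :
    -(Complex.exp (φ * Complex.I) / z) ∈ Complex.slitPlane := by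
  rw [div_eq_mul_inv, ← mul_neg]
  exact exp_ofReal_mul_I_mul_mem_slitPlane
    (neg_ne_zero.2 (inv_ne_zero (ne_zero_of_lt_abs_arg hφ))) (abs_add_abs_arg_neg_inv_lt_pi hφ)

theorem log_neg_exp_mul_I_div {φ : ℝ} {z : ℂ} (hφ : |φ| < |z.arg|) :
    Complex.log (-(Complex.exp (φ * Complex.I) / z)) = φ * Complex.I + Complex.log (-z⁻¹) := by
  rw [div_eq_mul_inv, ← mul_neg]
  exact log_exp_ofReal_mul_I_mul
    (neg_ne_zero.2 (inv_ne_zero (ne_zero_of_lt_abs_arg hφ))) (abs_add_abs_arg_neg_inv_lt_pi hφ)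

theorem exp_mul_I_mul_exp_neg_mul_I (θ : ℝ) :
    Complex.exp (θ * Complex.I) * Complex.exp (-θ * Complex.I) = 1 := by
  rw [← Complex.exp_add, neg_mul, add_neg_cancel, Complex.exp_zero]

theorem exp_mul_I_pow_sub_exp_neg_mul_I_pow (θ : ℝ) (k : ℕ) :
    Complex.exp (θ * Complex.I) ^ k - Complex.exp (-θ * Complex.I) ^ k =
      2 * Real.sin (k * θ) * Complex.I := by
  rw [← Complex.exp_nat_mul, ← Complex.exp_nat_mul, Complex.ofReal_sin, Complex.two_sin,
    mul_assoc, Complex.I_mul_I]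
  push_cast
  ring_nf

theorem exp_mul_I_mul_ofReal_pow (φ ρ : ℝ) (k : ℕ) :
    (Complex.exp (φ * Complex.I) * ρ) ^ k =
      (ρ ^ k * Real.cos (k * φ) : ℝ) + (ρ ^ k * Real.sin (k * φ) : ℝ) * Complex.I := by
  rw [mul_pow, ← Complex.exp_nat_mul, ← mul_assoc, ← Complex.ofReal_natCast,
    ← Complex.ofReal_mul, Complex.exp_ofReal_mul_I]
  push_cast
  ring

/-- The product of `e^{iθ} s - z` and `e^{-iθ} s - z`, the denominator of the spectral densities
of Mittag–Leffler functions at `z`. -/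
noncomputable def sectorQuadratic (θ : ℝ) (z : ℂ) (s : ℝ) : ℂ :=
  (Complex.exp (θ * Complex.I) * s - z) * (Complex.exp (-θ * Complex.I) * s - z)

@[fun_prop]
theorem continuous_sectorQuadratic (θ : ℝ) (z : ℂ) : Continuous (sectorQuadratic θ z) := by
  unfold sectorQuadratic
  fun_prop

theorem sectorQuadratic_eq (θ : ℝ) (z : ℂ) (s : ℝ) :
    sectorQuadratic θ z s = s ^ 2 - 2 * Real.cos θ * s * z + z ^ 2 := by
  rw [sectorQuadratic, Complex.ofReal_cos, Complex.two_cos]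
  linear_combination (s : ℂ) ^ 2 * exp_mul_I_mul_exp_neg_mul_I θ

theorem sectorQuadratic_mul_ofReal (θ : ℝ) (z : ℂ) {S : ℝ} (hS : S ≠ 0) (s : ℝ) :
    sectorQuadratic θ (z * S) s = S ^ 2 * sectorQuadratic θ z (s / S) := by
  have hS' : (S : ℂ) ≠ 0 := by exact_mod_cast hS
  simp only [sectorQuadratic, Complex.ofReal_div]
  field_simp

theorem sectorQuadratic_eq_one_add_mul_mul_one_add_mul (θ : ℝ) {z : ℂ} (hz : z ≠ 0) (s : ℝ) :
    sectorQuadratic θ z s = z ^ 2 * ((1 + s * -(Complex.exp (θ * Complex.I) / z)) *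
      (1 + s * -(Complex.exp ((-θ : ℝ) * Complex.I) / z))) := by
  rw [sectorQuadratic, Complex.ofReal_neg]
  field_simp
  ring

theorem sectorQuadratic_ne_zero {θ : ℝ} {z : ℂ} (hz : |θ| < |z.arg|) {s : ℝ} (hs : 0 ≤ s) :
    sectorQuadratic θ z s ≠ 0 := by
  have hz₀ := ne_zero_of_lt_abs_arg hz
  rw [sectorQuadratic_eq_one_add_mul_mul_one_add_mul θ hz₀]
  exact mul_ne_zero (pow_ne_zero 2 hz₀) (mul_ne_zero
    (Complex.slitPlane_ne_zero
      (one_add_ofReal_mul_mem_slitPlane (neg_exp_mul_I_div_mem_slitPlane hz) hs))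
    (Complex.slitPlane_ne_zero (one_add_ofReal_mul_mem_slitPlane
      (neg_exp_mul_I_div_mem_slitPlane ((abs_neg θ).trans_lt hz)) hs)))

theorem integrableOn_inv_sectorQuadratic {θ : ℝ} {z : ℂ} (hz : |θ| < |z.arg|) :
    IntegrableOn (fun s => (sectorQuadratic θ z s)⁻¹) (Set.Ioi 0) := by
  simp_rw [sectorQuadratic_eq_one_add_mul_mul_one_add_mul θ (ne_zero_of_lt_abs_arg hz),
    mul_inv (z ^ 2)]
  exact (integrableOn_inv_one_add_mul_mul_one_add_mul (neg_exp_mul_I_div_mem_slitPlane hz)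
    (neg_exp_mul_I_div_mem_slitPlane ((abs_neg θ).trans_lt hz))).const_mul _

theorem mul_sin_mul_integral_inv_sectorQuadratic {θ : ℝ} {z : ℂ} (hz : |θ| < |z.arg|) :
    z * Real.sin θ * ∫ s in Set.Ioi 0, (sectorQuadratic θ z s)⁻¹ = -θ := by
  have hz₀ := ne_zero_of_lt_abs_arg hz
  have hz' : |-θ| < |z.arg| := (abs_neg θ).trans_lt hz
  have hintegral := integral_inv_one_add_mul_mul_one_add_mul (neg_exp_mul_I_div_mem_slitPlane hz)
    (neg_exp_mul_I_div_mem_slitPlane hz')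
  rw [log_neg_exp_mul_I_div hz, log_neg_exp_mul_I_div hz'] at hintegral
  simp_rw [sectorQuadratic_eq_one_add_mul_mul_one_add_mul θ hz₀, mul_inv (z ^ 2)]
  rw [integral_const_mul]
  set J := ∫ s : ℝ in Set.Ioi 0, ((1 + s * -(Complex.exp (θ * Complex.I) / z)) *
      (1 + s * -(Complex.exp ((-θ : ℝ) * Complex.I) / z)))⁻¹
  have hsin : 2 * Real.sin θ * Complex.I =
      Complex.exp (θ * Complex.I) - Complex.exp ((-θ : ℝ) * Complex.I) := by
    rw [Complex.ofReal_sin, Complex.two_sin, mul_assoc, Complex.I_mul_I, Complex.ofReal_neg]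
    ring
  have hz₂ : z * (z ^ 2)⁻¹ = z⁻¹ := by field_simp
  rw [Complex.ofReal_neg] at hsin hintegral
  refine mul_left_cancel₀ (mul_ne_zero two_ne_zero Complex.I_ne_zero) ?_
  linear_combination 2 * Complex.I * Real.sin θ * J * hz₂ + z⁻¹ * J * hsin - hintegral

theorem sectorQuadratic_mul_sum_sin (θ : ℝ) (z : ℂ) (s : ℝ) (N : ℕ) :
    sectorQuadratic θ z s *
        ∑ j ∈ Finset.range N, z ^ j * s ^ (N - 1 - j) * Real.sin ((j + 1) * θ) =
      Real.sin θ * s ^ (N + 1) - Real.sin ((N + 1) * θ) * z ^ N * s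
        + Real.sin (N * θ) * z ^ (N + 1) := by
  induction N with
  | zero => simp
  | succ N ih =>
    have hshift : ∑ j ∈ Finset.range N, z ^ j * (s : ℂ) ^ (N - j) * Real.sin ((j + 1) * θ) =
        s * ∑ j ∈ Finset.range N, z ^ j * s ^ (N - 1 - j) * Real.sin ((j + 1) * θ) := by
      rw [Finset.mul_sum]
      refine Finset.sum_congr rfl fun j hj => ?_
      rw [show N - j = N - 1 - j + 1 by have := Finset.mem_range.1 hj; omega, pow_succ]
      ring
    have hsin : Real.sin ((N + 1 + 1) * θ) =
        2 * Real.cos θ * Real.sin ((N + 1) * θ) - Real.sin (N * θ) := by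
      rw [add_one_mul (N + 1 : ℝ) θ, Real.sin_add,
        show Real.sin (N * θ) = Real.sin ((N + 1) * θ - θ) by ring_nf, Real.sin_sub]
      ring
    rw [Finset.sum_range_succ, mul_add, Nat.add_sub_cancel, hshift, Nat.cast_succ, hsin,
      Nat.sub_self]
    simp only [Complex.ofReal_sub, Complex.ofReal_mul, Complex.ofReal_ofNat]
    linear_combination (s : ℂ) * ih +
      z ^ N * Real.sin ((N + 1) * θ) * sectorQuadratic_eq θ z s

theorem sectorQuadratic_mul_sum_sin_pi_div {n : ℕ} (hn : n ≠ 0) (z : ℂ) (s : ℝ) :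
    sectorQuadratic (Real.pi / n) z s * ∑ j ∈ Finset.range (n - 1),
        z ^ j * s ^ (n - 1 - 1 - j) * Real.sin ((j + 1) * (Real.pi / n)) =
      Real.sin (Real.pi / n) * (s ^ n + z ^ n) := by
  obtain ⟨N, rfl⟩ := Nat.exists_eq_succ_of_ne_zero hn
  have hpi : ((N : ℝ) + 1) * (Real.pi / (N + 1 : ℕ)) = Real.pi := by
    push_cast
    field_simp
  have hsin : Real.sin (N * (Real.pi / (N + 1 : ℕ))) = Real.sin (Real.pi / (N + 1 : ℕ)) := by
    rw [← Real.sin_pi_sub]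
    congr 1
    linear_combination -hpi
  rw [Nat.succ_sub_one, sectorQuadratic_mul_sum_sin, Nat.succ_eq_add_one, hpi, hsin, Real.sin_pi]
  push_cast
  ring

/-! ### Laplace-type integrals -/

theorem mul_exp_neg_mul_le_inv {a : ℝ} (ha : 0 < a) (x : ℝ) : x * Real.exp (-a * x) ≤ a⁻¹ := by
  rw [neg_mul, Real.exp_neg, ← div_eq_mul_inv, ← one_div, div_le_div_iff₀ (Real.exp_pos _) ha]
  linarith [Real.add_one_le_exp (a * x)]

section IntegralExp

variable {X : Type*} [MeasurableSpace X] {ν : Measure X} {f : X → ℂ} {g : X → ℝ}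

theorem aestronglyMeasurable_exp_neg_mul (hg : AEStronglyMeasurable g ν) (a : ℝ) :
    AEStronglyMeasurable (fun x => (Real.exp (-a * g x) : ℂ)) ν :=
  Complex.continuous_ofReal.comp_aestronglyMeasurable
    (Real.continuous_exp.comp_aestronglyMeasurable (hg.const_mul (-a)))

theorem norm_exp_neg_mul_mul_le {a x : ℝ} (ha : 0 ≤ a) (hx : 0 ≤ x) (c : ℂ) :
    ‖(Real.exp (-a * x) : ℂ) * c‖ ≤ ‖c‖ := by
  rw [norm_mul, Complex.norm_real, Real.norm_of_nonneg (Real.exp_pos _).le]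
  exact mul_le_of_le_one_left (norm_nonneg _)
    (Real.exp_le_one_iff.2 (mul_nonpos_of_nonpos_of_nonneg (neg_nonpos.2 ha) hx))

theorem norm_mul_exp_neg_mul_mul_le {a x : ℝ} (ha : 0 < a) (hx : 0 ≤ x) (c : ℂ) :
    ‖(x * Real.exp (-a * x) : ℂ) * c‖ ≤ a⁻¹ * ‖c‖ := by
  rw [norm_mul, ← Complex.ofReal_mul, Complex.norm_real,
    Real.norm_of_nonneg (mul_nonneg hx (Real.exp_pos _).le)]
  gcongr
  exact mul_exp_neg_mul_le_inv ha x

theorem integrable_exp_neg_mul_mul (hf : Integrable f ν) (hg : AEStronglyMeasurable g ν)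
    (hg₀ : ∀ᵐ x ∂ν, 0 ≤ g x) {a : ℝ} (ha : 0 ≤ a) :
    Integrable (fun x => (Real.exp (-a * g x) : ℂ) * f x) ν :=
  hf.mono ((aestronglyMeasurable_exp_neg_mul hg a).mul hf.aestronglyMeasurable)
    (hg₀.mono fun x hx => norm_exp_neg_mul_mul_le ha hx (f x))

theorem integrable_mul_exp_neg_mul_mul (hf : Integrable f ν) (hg : AEStronglyMeasurable g ν)
    (hg₀ : ∀ᵐ x ∂ν, 0 ≤ g x) {a : ℝ} (ha : 0 < a) :
    Integrable (fun x => g x * (Real.exp (-a * g x) : ℂ) * f x) ν :=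
  (hf.norm.const_mul a⁻¹).mono'
    (((Complex.continuous_ofReal.comp_aestronglyMeasurable hg).mul
      (aestronglyMeasurable_exp_neg_mul hg a)).mul hf.aestronglyMeasurable)
    (hg₀.mono fun x hx => norm_mul_exp_neg_mul_mul_le ha hx (f x))

theorem hasDerivAt_integral_exp_neg_mul (hf : Integrable f ν) (hg : AEStronglyMeasurable g ν)
    (hg₀ : ∀ᵐ x ∂ν, 0 ≤ g x) {a : ℝ} (ha : 0 < a) :
    HasDerivAt (fun b : ℝ => ∫ x, (Real.exp (-b * g x) : ℂ) * f x ∂ν)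
      (-∫ x, g x * Real.exp (-a * g x) * f x ∂ν) a := by
  have hbound : ∀ᵐ x ∂ν, ∀ b ∈ Set.Ioi (a / 2),
      ‖-(g x * Real.exp (-b * g x) * f x)‖ ≤ (a / 2)⁻¹ * ‖f x‖ := by
    filter_upwards [hg₀] with x hx b hb
    have hb₀ : 0 < b := (half_pos ha).trans hb
    rw [norm_neg]
    refine (norm_mul_exp_neg_mul_mul_le hb₀ hx (f x)).trans ?_
    gcongr
    exact le_of_lt hb
  have hderiv (x : X) (b : ℝ) : HasDerivAt (fun b : ℝ => (Real.exp (-b * g x) : ℂ) * f x)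
      (-(g x * Real.exp (-b * g x) * f x)) b := by
    have hreal : HasDerivAt (fun b : ℝ => Real.exp (-b * g x))
        (Real.exp (-b * g x) * (-1 * g x)) b := ((hasDerivAt_neg b).mul_const _).exp
    refine (hreal.ofReal_comp.mul_const (f x)).congr_deriv ?_
    push_cast
    ring
  rw [← integral_neg]
  exact (hasDerivAt_integral_of_dominated_loc_of_deriv_le
    (Ioi_mem_nhds (half_lt_self ha))
    (.of_forall fun b => (aestronglyMeasurable_exp_neg_mul hg b).mul hf.aestronglyMeasurable)
    (integrable_exp_neg_mul_mul hf hg hg₀ ha.le)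
    (integrable_mul_exp_neg_mul_mul hf hg hg₀ ha).neg.aestronglyMeasurable
    hbound (hf.norm.const_mul _) (.of_forall fun x b _ => hderiv x b)).2

theorem tendsto_integral_exp_neg_mul_nhdsGT_zero (hf : Integrable f ν)
    (hg : AEStronglyMeasurable g ν) (hg₀ : ∀ᵐ x ∂ν, 0 ≤ g x) :
    Tendsto (fun b : ℝ => ∫ x, (Real.exp (-b * g x) : ℂ) * f x ∂ν) (𝓝[>] 0)
      (𝓝 (∫ x, f x ∂ν)) := by
  refine tendsto_integral_filter_of_dominated_convergence (fun x => ‖f x‖)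
    (.of_forall fun b => (aestronglyMeasurable_exp_neg_mul hg b).mul hf.aestronglyMeasurable)
    ?_ hf.norm (.of_forall fun x => tendsto_nhdsWithin_of_tendsto_nhds ?_)
  · filter_upwards [self_mem_nhdsWithin] with b hb
    filter_upwards [hg₀] with x hx using norm_exp_neg_mul_mul_le (le_of_lt hb) hx (f x)
  · have hcont : Continuous fun b : ℝ => (Real.exp (-b * g x) : ℂ) * f x := by fun_prop
    simpa using hcont.tendsto 0

end IntegralExp

theorem integrableOn_pow_mul_exp_neg_mul_pow {n : ℕ} (hn : n ≠ 0) (k : ℕ) {a : ℝ} (ha : 0 < a) :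
    IntegrableOn (fun s : ℝ => s ^ k * Real.exp (-a * s ^ n)) (Set.Ioi 0) := by
  have hn' : (0 : ℝ) < n := by exact_mod_cast hn.bot_lt
  exact_mod_cast integrableOn_rpow_mul_exp_neg_mul_rpow (s := k) (p := n)
    (neg_one_lt_zero.trans_le k.cast_nonneg) hn' ha

theorem pow_mul_integral_pow_mul_exp_neg_pow_mul_pow {n : ℕ} (hn : n ≠ 0) (k : ℕ) {t : ℝ}
    (ht : 0 < t) :
    t ^ (k + 1) * ∫ s in Set.Ioi 0, s ^ k * Real.exp (-t ^ n * s ^ n) =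
      Real.Gamma ((k + 1) / n) / n := by
  have hn' : (0 : ℝ) < n := by exact_mod_cast hn.bot_lt
  have hintegral := integral_rpow_mul_exp_neg_mul_rpow hn'
    (neg_one_lt_zero.trans_le k.cast_nonneg) (pow_pos ht n)
  have hpow : (t ^ n) ^ (-((k : ℝ) + 1) / n) = (t ^ (k + 1))⁻¹ := by
    rw [← Real.rpow_natCast t n, ← Real.rpow_mul ht.le, mul_div_cancel₀ _ hn'.ne',
      Real.rpow_neg ht.le]
    norm_cast
  rw [hpow] at hintegral
  simp only [Real.rpow_natCast] at hintegral
  rw [hintegral]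
  field_simp

theorem integral_pow_mul_exp_neg_one_mul_pow {n : ℕ} (hn : n ≠ 0) (k : ℕ) :
    ∫ s : ℝ in Set.Ioi 0, s ^ k * Real.exp (-1 * s ^ n) = Real.Gamma ((k + 1) / n) / n := by
  simpa using pow_mul_integral_pow_mul_exp_neg_pow_mul_pow hn k one_pos

theorem eq_zero_of_hasDerivAt_mul_self {y P P' : ℝ → ℂ} {p : ℂ}
    (hP : ∀ t > 0, HasDerivAt P (P' t) t) (hy : ∀ t > 0, HasDerivAt y (P' t * y t) t)
    (hP₀ : Tendsto P (𝓝[>] 0) (𝓝 p)) (hy₀ : Tendsto y (𝓝[>] 0) (𝓝 0)) {t : ℝ} (ht : 0 < t) :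
    y t = 0 := by
  set w : ℝ → ℂ := fun t => Complex.exp (-P t) * y t
  have hderiv (s : ℝ) (hs : 0 < s) : HasDerivAt w 0 s := by
    refine ((hP s hs).neg.cexp.mul (hy s hs)).congr_deriv ?_
    ring
  have hconst (s : ℝ) (hs : 0 < s) : w s = w t :=
    isOpen_Ioi.is_const_of_deriv_eq_zero isPreconnected_Ioi
      (fun s hs => (hderiv s hs).differentiableAt.differentiableWithinAt)
      (fun s hs => (hderiv s hs).deriv) hs ht
  have hw₀ : Tendsto w (𝓝[>] 0) (𝓝 0) := by
    simpa using hP₀.neg.cexp.mul hy₀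
  have hwt : w t = 0 := tendsto_nhds_unique
    (tendsto_const_nhds.congr' (by
      filter_upwards [self_mem_nhdsWithin] with s hs using (hconst s hs).symm)) hw₀
  exact (mul_eq_zero.1 hwt).resolve_left (Complex.exp_ne_zero _)

theorem sin_mul_Gamma_mul_Gamma_one_sub {x : ℝ} (hx₀ : 0 < x) (hx₁ : x < 1) :
    Real.sin (x * Real.pi) * Real.Gamma (1 - x) = Real.pi / Real.Gamma x := by
  have hsin : Real.sin (Real.pi * x) ≠ 0 := (Real.sin_pos_of_pos_of_lt_pi (by positivity)
    (mul_lt_of_lt_one_right Real.pi_pos hx₁)).ne'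
  have hreflection := Real.Gamma_mul_Gamma_one_sub x
  rw [eq_div_iff hsin] at hreflection
  rw [eq_div_iff (Real.Gamma_pos_of_pos hx₀).ne', mul_comm x]
  linear_combination hreflection

theorem Gamma_one_add_mul_sin_div_pi_mul_Gamma_two_sub {x : ℝ} (hx₀ : 0 < x) (hx₁ : x < 1) :
    Real.Gamma (1 + x) * (Real.sin (x * Real.pi) / Real.pi * Real.Gamma (2 - x)) =
      x * (1 - x) := by
  have hone : Real.Gamma (1 + x) = x * Real.Gamma x := by
    rw [add_comm, Real.Gamma_add_one hx₀.ne']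
  have htwo : Real.Gamma (2 - x) = (1 - x) * Real.Gamma (1 - x) := by
    rw [← Real.Gamma_add_one (sub_pos.2 hx₁).ne']
    ring_nf
  have hreflection := sin_mul_Gamma_mul_Gamma_one_sub hx₀ hx₁
  have hGamma := (Real.Gamma_pos_of_pos hx₀).ne'
  rw [eq_div_iff hGamma] at hreflection
  rw [hone, htwo]
  field_simp
  linear_combination (1 - x) * hreflection

/-! ### Integral representation of Mittag–Leffler functions -/

/-- The integral `∫₀^∞ s^k e^{-a s^n} / q(s) ds` with `q(s) = (e^{iπ/n} s - z) (e^{-iπ/n} s - z)`,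
which represents Mittag–Leffler functions of index `1/n` at `z`. -/
noncomputable def sectorMoment (n k : ℕ) (z : ℂ) (a : ℝ) : ℂ :=
  ∫ s : ℝ in Set.Ioi 0,
    s ^ k * (Real.exp (-a * s ^ n) : ℂ) * (sectorQuadratic (Real.pi / n) z s)⁻¹

section SectorMoment

variable {n : ℕ} {z : ℂ}

theorem abs_pi_div_natCast (n : ℕ) : |Real.pi / n| = Real.pi / n := abs_of_nonneg (by positivity)

theorem ae_Ioi_zero_pow_nonneg (n : ℕ) : ∀ᵐ s : ℝ ∂volume.restrict (Set.Ioi 0), 0 ≤ s ^ n :=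
  (ae_restrict_mem measurableSet_Ioi).mono fun _ hs => pow_nonneg (le_of_lt hs) n

theorem sectorMoment_zero (n : ℕ) (z : ℂ) : sectorMoment n 0 z = fun a => ∫ s : ℝ in Set.Ioi 0,
    (Real.exp (-a * s ^ n) : ℂ) * (sectorQuadratic (Real.pi / n) z s)⁻¹ := by
  ext a
  simp only [sectorMoment, pow_zero, one_mul]

theorem hasDerivAt_sectorMoment_zero (hz : |Real.pi / n| < |z.arg|) {a : ℝ} (ha : 0 < a) :
    HasDerivAt (sectorMoment n 0 z) (-sectorMoment n n z a) a := by
  rw [sectorMoment_zero]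
  simpa only [sectorMoment, Complex.ofReal_pow] using
    hasDerivAt_integral_exp_neg_mul (integrableOn_inv_sectorQuadratic hz)
      (by fun_prop) (ae_Ioi_zero_pow_nonneg n) ha

theorem tendsto_sectorMoment_zero_nhdsGT_zero (hz : |Real.pi / n| < |z.arg|) :
    Tendsto (sectorMoment n 0 z) (𝓝[>] 0)
      (𝓝 (∫ s in Set.Ioi 0, (sectorQuadratic (Real.pi / n) z s)⁻¹)) := by
  rw [sectorMoment_zero]
  exact tendsto_integral_exp_neg_mul_nhdsGT_zero (integrableOn_inv_sectorQuadratic hz)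
    (by fun_prop) (ae_Ioi_zero_pow_nonneg n)

theorem sin_mul_sectorMoment_add (hn : n ≠ 0) (hz : |Real.pi / n| < |z.arg|) {a : ℝ} (ha : 0 < a) :
    Real.sin (Real.pi / n) * (sectorMoment n n z a + z ^ n * sectorMoment n 0 z a) =
      ∑ j ∈ Finset.range (n - 1), z ^ j * Real.sin ((j + 1) * (Real.pi / n)) *
        ((∫ s in Set.Ioi 0, s ^ (n - 1 - 1 - j) * Real.exp (-a * s ^ n) : ℝ) : ℂ) := by
  have hq := integrableOn_inv_sectorQuadratic hz
  have hintegrable := integrable_mul_exp_neg_mul_mul hq (by fun_prop) (ae_Ioi_zero_pow_nonneg n) ha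
  have hintegrable₀ := integrable_exp_neg_mul_mul hq (by fun_prop) (ae_Ioi_zero_pow_nonneg n) ha.le
  have hGamma (k : ℕ) : IntegrableOn
      (fun s : ℝ => ((s ^ k * Real.exp (-a * s ^ n) : ℝ) : ℂ)) (Set.Ioi 0) :=
    (integrableOn_pow_mul_exp_neg_mul_pow hn k ha).ofReal
  simp only [Complex.ofReal_pow] at hintegrable
  rw [sectorMoment_zero]
  simp_rw [← integral_complex_ofReal, sectorMoment, ← integral_const_mul]
  rw [← integral_add hintegrable (hintegrable₀.const_mul _), ← integral_const_mul,
    ← integral_finsetSum _ fun j _ => (hGamma _).const_mul _]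
  refine setIntegral_congr_fun measurableSet_Ioi fun s hs => ?_
  have hsum := (eq_inv_mul_iff_mul_eq₀ (sectorQuadratic_ne_zero hz (le_of_lt hs))).2
    (sectorQuadratic_mul_sum_sin_pi_div hn z s)
  calc Real.sin (Real.pi / n) * (s ^ n * (Real.exp (-a * s ^ n) : ℂ) *
          (sectorQuadratic (Real.pi / n) z s)⁻¹ + z ^ n * ((Real.exp (-a * s ^ n) : ℂ) *
            (sectorQuadratic (Real.pi / n) z s)⁻¹))
      = Real.exp (-a * s ^ n) * ((sectorQuadratic (Real.pi / n) z s)⁻¹ *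
          (Real.sin (Real.pi / n) * (s ^ n + z ^ n))) := by ring
    _ = _ := by
      rw [← hsum, Finset.mul_sum]
      refine Finset.sum_congr rfl fun j _ => ?_
      push_cast
      ring

theorem sin_mul_integral_pow_mul_exp_neg_pow_mul_pow {j : ℕ} (hj : j < n - 1) {t : ℝ}
    (ht : 0 < t) :
    n / Real.pi * t ^ (n - 1) * (Real.sin ((j + 1) * (Real.pi / n)) *
        ∫ s in Set.Ioi 0, s ^ (n - 1 - 1 - j) * Real.exp (-t ^ n * s ^ n)) =
      t ^ j / Real.Gamma (1 / n + 1 / n * j) := by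
  have hn : n ≠ 0 := by omega
  have hGamma := pow_mul_integral_pow_mul_exp_neg_pow_mul_pow hn (n - 1 - 1 - j) ht
  have hnk : n - 1 = j + (n - 1 - 1 - j + 1) := by omega
  have hn' : (n : ℝ) = j + (n - 1 - 1 - j : ℕ) + 2 := by exact_mod_cast (by omega)
  set k := n - 1 - 1 - j
  set x : ℝ := 1 / n + 1 / n * j with hx
  have hn₀ : (n : ℝ) ≠ 0 := by exact_mod_cast hn
  have hx₁ : 1 - x = (k + 1) / n := by
    rw [hx, eq_div_iff hn₀, hn']
    field_simp
    ring
  have hsin : ((j : ℝ) + 1) * (Real.pi / n) = x * Real.pi := by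
    rw [hx]
    ring
  have hreflection := sin_mul_Gamma_mul_Gamma_one_sub (x := x) (by positivity)
    (sub_pos.1 (hx₁ ▸ by positivity))
  rw [← hx₁, eq_div_iff hn₀] at hGamma
  rw [hnk, pow_add, hsin, div_eq_mul_inv (t ^ j)]
  have hpi : Real.pi⁻¹ * Real.pi = 1 := inv_mul_cancel₀ Real.pi_ne_zero
  rw [← hGamma] at hreflection
  linear_combination t ^ j / Real.pi * hreflection + t ^ j * (Real.Gamma x)⁻¹ * hpi

theorem sin_mul_sectorMoment_add_eq_sum_Gamma (hn : n ≠ 0) (hz : |Real.pi / n| < |z.arg|)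
    {t : ℝ} (ht : 0 < t) :
    n / Real.pi * Real.sin (Real.pi / n) * t ^ (n - 1) *
        (sectorMoment n n z (t ^ n) + z ^ n * sectorMoment n 0 z (t ^ n)) =
      ∑ j ∈ Finset.range (n - 1), (z * t) ^ j / (Real.Gamma (1 / n + 1 / n * j) : ℂ) := by
  calc n / Real.pi * Real.sin (Real.pi / n) * t ^ (n - 1) *
        (sectorMoment n n z (t ^ n) + z ^ n * sectorMoment n 0 z (t ^ n))
      = n / Real.pi * t ^ (n - 1) * (Real.sin (Real.pi / n) *
          (sectorMoment n n z (t ^ n) + z ^ n * sectorMoment n 0 z (t ^ n))) := by ring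
    _ = _ := by
      rw [sin_mul_sectorMoment_add hn hz (pow_pos ht n), Finset.mul_sum]
      refine Finset.sum_congr rfl fun j hj => ?_
      have hterm' := congrArg Complex.ofReal
        (sin_mul_integral_pow_mul_exp_neg_pow_mul_pow (Finset.mem_range.1 hj) ht)
      simp only [Complex.ofReal_mul, Complex.ofReal_div, Complex.ofReal_pow,
        Complex.ofReal_natCast] at hterm'
      rw [mul_pow, mul_div_assoc, ← hterm']
      ring

theorem mittagLeffler_inv_self_eq_sum_add (hn : n ≠ 0) (w : ℂ) :
    mittagLeffler (1 / n) (1 / n) w =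
      ∑ j ∈ Finset.range (n - 1), w ^ j / (Real.Gamma (1 / n + 1 / n * j) : ℂ) +
        w ^ (n - 1) * mittagLeffler (1 / n) 1 w := by
  have hn' : (0 : ℝ) < n := by exact_mod_cast hn.bot_lt
  rw [mittagLeffler_eq_sum_add (one_div_pos.2 hn') _ (n - 1), Nat.cast_pred hn.bot_lt]
  congr 3
  field_simp
  ring

theorem hasDerivAt_mittagLeffler_inv_one_mul (hn : n ≠ 0) (z : ℂ) (t : ℝ) :
    HasDerivAt (fun t : ℝ => mittagLeffler (1 / n) 1 (z * t))
      (n * z * mittagLeffler (1 / n) (1 / n) (z * t)) t := by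
  have hn' : (0 : ℝ) < n := by exact_mod_cast hn.bot_lt
  have hlin : HasDerivAt (fun t : ℝ => z * t) z t := by
    simpa using Complex.ofRealCLM.hasDerivAt.const_mul z
  refine ((hasDerivAt_mittagLeffler_one (one_div_pos.2 hn') (z * t)).comp t hlin).congr_deriv ?_
  push_cast
  field_simp

theorem mul_integral_inv_sectorQuadratic_pi_div (hn : n ≠ 0) (hz : |Real.pi / n| < |z.arg|) :
    -(n * z * Real.sin (Real.pi / n) / Real.pi) *
      ∫ s in Set.Ioi 0, (sectorQuadratic (Real.pi / n) z s)⁻¹ = 1 := by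
  have hn' : (n : ℂ) ≠ 0 := by exact_mod_cast hn
  have hpi : (Real.pi : ℂ) ≠ 0 := by exact_mod_cast Real.pi_ne_zero
  have hcancel : (n : ℂ) / Real.pi * (Real.pi / n : ℝ) = 1 := by
    push_cast
    field_simp
  linear_combination hcancel - n / Real.pi * mul_sin_mul_integral_inv_sectorQuadratic hz

theorem tendsto_mittagLeffler_sub_sectorMoment_nhdsGT_zero (hn : n ≠ 0)
    (hz : |Real.pi / n| < |z.arg|) :
    Tendsto (fun t : ℝ => mittagLeffler (1 / n) 1 (z * t) -
      -(n * z * Real.sin (Real.pi / n) / Real.pi) * sectorMoment n 0 z (t ^ n))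
      (𝓝[>] 0) (𝓝 0) := by
  have hML : Tendsto (fun t : ℝ => mittagLeffler (1 / n) 1 (z * t)) (𝓝[>] 0) (𝓝 1) := by
    simpa [mittagLeffler_zero] using
      (hasDerivAt_mittagLeffler_inv_one_mul hn z 0).continuousAt.tendsto.mono_left
        (nhdsWithin_le_nhds (s := Set.Ioi 0))
  have hpow : Tendsto (fun t : ℝ => t ^ n) (𝓝[>] 0) (𝓝[>] 0) := by
    refine tendsto_nhdsWithin_iff.2 ⟨tendsto_nhdsWithin_of_tendsto_nhds ?_, ?_⟩
    · simpa [hn] using (continuous_pow n).tendsto (0 : ℝ)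
    · filter_upwards [self_mem_nhdsWithin] with t ht using pow_pos (Set.mem_Ioi.1 ht) n
  have hmoment := ((tendsto_sectorMoment_zero_nhdsGT_zero hz).comp hpow).const_mul
    (-(n * z * Real.sin (Real.pi / n) / Real.pi))
  rw [mul_integral_inv_sectorQuadratic_pi_div hn hz] at hmoment
  simpa using hML.sub hmoment

theorem mittagLeffler_inv_one_mul_eq_sectorMoment (hn : n ≠ 0) (hz : |Real.pi / n| < |z.arg|)
    {t : ℝ} (ht : 0 < t) :
    mittagLeffler (1 / n) 1 (z * t) =
      -(n * z * Real.sin (Real.pi / n) / Real.pi) * sectorMoment n 0 z (t ^ n) := by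
  set c : ℂ := -(n * z * Real.sin (Real.pi / n) / Real.pi) with hc
  have hpow (t : ℝ) : HasDerivAt (fun t : ℝ => t ^ n) (n * t ^ (n - 1)) t := hasDerivAt_pow n t
  have hP (t : ℝ) : HasDerivAt (fun t : ℝ => z ^ n * (t ^ n : ℝ)) (z ^ n * (n * t ^ (n - 1))) t :=
    ((hpow t).ofReal_comp.const_mul (z ^ n)).congr_deriv (by push_cast; ring)
  have hM (t : ℝ) (ht : 0 < t) : HasDerivAt (fun t : ℝ => c * sectorMoment n 0 z (t ^ n))
      (c * ((n * t ^ (n - 1)) * -sectorMoment n n z (t ^ n))) t := by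
    refine (((hasDerivAt_sectorMoment_zero hz (pow_pos ht n)).scomp t (hpow t)).const_mul
      c).congr_deriv ?_
    rw [Complex.real_smul]
    push_cast
    ring
  have hode (t : ℝ) (ht : 0 < t) := ((hasDerivAt_mittagLeffler_inv_one_mul hn z t).sub
    (hM t ht)).congr_deriv (g' := z ^ n * (n * t ^ (n - 1)) *
      (mittagLeffler (1 / n) 1 (z * t) - c * sectorMoment n 0 z (t ^ n))) (by
    rw [mittagLeffler_inv_self_eq_sum_add hn, ← sin_mul_sectorMoment_add_eq_sum_Gamma hn hz ht,
      mul_pow, ← mul_pow_sub_one hn z, hc]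
    ring)
  exact sub_eq_zero.1 (eq_zero_of_hasDerivAt_mul_self (fun t _ => hP t) hode
    ((hP 0).continuousAt.tendsto.mono_left nhdsWithin_le_nhds)
    (tendsto_mittagLeffler_sub_sectorMoment_nhdsGT_zero hn hz) ht)

theorem mittagLeffler_inv_self_eq_sectorMoment (hn : n ≠ 0) (hz : |Real.pi / n| < |z.arg|) :
    mittagLeffler (1 / n) (1 / n) z =
      n * Real.sin (Real.pi / n) / Real.pi * sectorMoment n n z 1 := by
  have hone := mittagLeffler_inv_one_mul_eq_sectorMoment hn hz one_pos
  have hsum := sin_mul_sectorMoment_add_eq_sum_Gamma hn hz one_pos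
  obtain ⟨N, rfl⟩ := Nat.exists_eq_succ_of_ne_zero hn
  simp only [Complex.ofReal_one, mul_one, one_pow] at hone hsum
  rw [mittagLeffler_inv_self_eq_sum_add hn, ← hsum, hone, Nat.succ_sub_one, pow_succ]
  ring

end SectorMoment

/-! ### Partial fractions -/

theorem nodal_univ_eq_of_monic {F ι : Type*} [Field F] [Fintype ι] {P : F[X]} (hP : P.Monic)
    (hdeg : P.natDegree = Fintype.card ι) {r : ι → F} (hr : Function.Injective r)
    (hroot : ∀ k, P.IsRoot (r k)) : Lagrange.nodal Finset.univ r = P := by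
  have hdegree : (Lagrange.nodal Finset.univ r).degree = P.degree := by
    rw [Lagrange.degree_nodal, degree_eq_natDegree hP.ne_zero, hdeg, Finset.card_univ]
  refine eq_of_degree_sub_lt_of_eval_index_eq Finset.univ hr.injOn ?_ fun k hk => ?_
  · rw [← Lagrange.degree_nodal (v := r)]
    exact degree_sub_lt_left hdegree Lagrange.nodal_ne_zero
      (by rw [hP.leadingCoeff, Lagrange.nodal_monic.leadingCoeff])
  · rw [Lagrange.eval_nodal_at_node hk, (hroot k).eq_zero]

theorem sum_inv_sub_div_eval_derivative {F ι : Type*} [Field F] [Fintype ι] [Nonempty ι]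
    {P : F[X]} (hP : P.Monic) (hdeg : P.natDegree = Fintype.card ι) {r : ι → F}
    (hr : Function.Injective r) (hroot : ∀ k, P.IsRoot (r k)) {x : F} (hx : ∀ k, x ≠ r k) :
    ∑ k, (x - r k)⁻¹ / P.derivative.eval (r k) = (P.eval x)⁻¹ := by
  classical
  have hinterpolate := Lagrange.eval_interpolate_not_at_node (s := Finset.univ) (1 : ι → F)
    (fun k _ => hx k)
  rw [Lagrange.interpolate_one hr.injOn Finset.univ_nonempty, eval_one,
    nodal_univ_eq_of_monic hP hdeg hr hroot] at hinterpolate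
  rw [inv_eq_of_mul_eq_one_right hinterpolate.symm]
  refine Finset.sum_congr rfl fun k hk => ?_
  rw [Lagrange.nodalWeight_eq_eval_derivative_nodal hk,
    nodal_univ_eq_of_monic hP hdeg hr hroot, Pi.one_apply, mul_one, div_eq_inv_mul]

theorem sum_inv_sub_mul_sub_div_eval_derivative {F ι : Type*} [Field F] [Fintype ι] [Nonempty ι]
    {P : F[X]} (hP : P.Monic) (hdeg : P.natDegree = Fintype.card ι) {r : ι → F}
    (hr : Function.Injective r) (hroot : ∀ k, P.IsRoot (r k)) {u v : F} (huv : u ≠ v)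
    (hu : ∀ k, u ≠ r k) (hv : ∀ k, v ≠ r k) :
    ∑ k, ((u - r k) * (v - r k))⁻¹ / P.derivative.eval (r k) =
      ((P.eval v)⁻¹ - (P.eval u)⁻¹) / (u - v) := by
  rw [← sum_inv_sub_div_eval_derivative hP hdeg hr hroot hu,
    ← sum_inv_sub_div_eval_derivative hP hdeg hr hroot hv, ← Finset.sum_sub_distrib,
    Finset.sum_div]
  refine Finset.sum_congr rfl fun k _ => ?_
  have huk := sub_ne_zero.2 (hu k)
  have hvk := sub_ne_zero.2 (hv k)
  rw [← sub_div, inv_sub_inv hvk huk, sub_sub_sub_cancel_right, div_right_comm,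
    div_div_cancel_left' (sub_ne_zero.2 huv), mul_comm]

theorem exists_pos_forall_le_norm_eval_mul_ofReal {P : ℂ[X]} (hP : 0 < P.degree) {w : ℂ}
    (hw : w ≠ 0) (hne : ∀ s : ℝ, 0 ≤ s → P.eval (w * s) ≠ 0) :
    ∃ δ > 0, ∀ s : ℝ, 0 ≤ s → δ ≤ ‖P.eval (w * s)‖ := by
  have hcont : Continuous fun s : ℝ => ‖P.eval (w * s)‖ := by fun_prop
  have hnorm : Tendsto (fun s : ℝ => ‖w * s‖) (cocompact ℝ) atTop := by
    simp only [norm_mul, Complex.norm_real]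
    exact (tendsto_norm_cocompact_atTop (E := ℝ)).const_mul_atTop (norm_pos_iff.2 hw)
  have hlarge : ∀ᶠ s : ℝ in cocompact ℝ ⊓ 𝓟 (Set.Ici 0),
      ‖P.eval (w * (0 : ℝ))‖ ≤ ‖P.eval (w * s)‖ :=
    ((P.tendsto_norm_atTop hP hnorm).eventually_ge_atTop _).filter_mono inf_le_left
  obtain ⟨s₀, hs₀, hmin⟩ :=
    hcont.continuousOn.exists_isMinOn' isClosed_Ici (Set.self_mem_Ici (a := (0 : ℝ))) hlarge
  exact ⟨_, norm_pos_iff.2 (hne s₀ hs₀), fun s hs => hmin hs⟩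

theorem tendsto_integral_mul_comp_div_atTop {w F : ℝ → ℂ} {C : ℝ}
    (hw : IntegrableOn w (Set.Ioi 0)) (hF : ContinuousOn F (Set.Ici 0))
    (hC : ∀ x, 0 ≤ x → ‖F x‖ ≤ C) :
    Tendsto (fun S : ℝ => ∫ s in Set.Ioi 0, w s * F (s / S)) atTop
      (𝓝 ((∫ s in Set.Ioi 0, w s) * F 0)) := by
  rw [← integral_mul_const]
  refine tendsto_integral_filter_of_dominated_convergence (fun s => ‖w s‖ * C) ?_ ?_
    (hw.norm.mul_const C) ?_
  · filter_upwards [eventually_gt_atTop 0] with S hS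
    refine hw.aestronglyMeasurable.mul (ContinuousOn.aestronglyMeasurable ?_ measurableSet_Ioi)
    exact hF.comp (by fun_prop) fun s hs => div_nonneg (le_of_lt hs) hS.le
  · filter_upwards [eventually_gt_atTop 0] with S hS
    filter_upwards [ae_restrict_mem measurableSet_Ioi] with s hs
    rw [norm_mul]
    gcongr
    exact hC _ (div_nonneg (le_of_lt hs) hS.le)
  · filter_upwards [ae_restrict_mem measurableSet_Ioi] with s hs
    refine (((hF 0 Set.self_mem_Ici).tendsto).comp (tendsto_nhdsWithin_iff.2
      ⟨tendsto_const_nhds.div_atTop tendsto_id, ?_⟩)).const_mul (w s)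
    filter_upwards [eventually_gt_atTop 0] with S hS using div_nonneg (le_of_lt hs) hS.le

theorem degree_C_mul_X_pow_sub_add_one_lt {R : Type*} [Semiring R] {n m : ℕ} (hn : 0 < n)
    (hm : 0 < m) (c : R) : (C c * X ^ (n - m) + 1 : R[X]).degree < n :=
  (degree_add_le _ _).trans_lt (max_lt
    ((degree_C_mul_X_pow_le _ _).trans_lt (by exact_mod_cast Nat.sub_lt hn hm))
    (degree_one_le.trans_lt (by exact_mod_cast hn)))

/-! ### The Andrade polynomial -/

/-- The polynomial `p_{n,m}`, with an arbitrary real number `γ` in place of `Γ(1 + m/n)`. -/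
noncomputable def andradePoly (n m : ℕ) (γ : ℝ) : ℂ[X] :=
  X ^ n + (C (γ : ℂ) * X ^ (n - m) + 1)

/-- The product of the values of `andradePoly n m γ` at `e^{iπ/n} x` and `e^{-iπ/n} x`, the
denominator of the spectral density of the Andrade relaxation modulus. -/
noncomputable def andradeSymbol (n m : ℕ) (γ x : ℝ) : ℂ :=
  (andradePoly n m γ).eval (Complex.exp ((Real.pi / n : ℝ) * Complex.I) * x) *
    (andradePoly n m γ).eval (Complex.exp (-(Real.pi / n : ℝ) * Complex.I) * x)

section Andrade

variable {n m : ℕ} {γ : ℝ}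

theorem eval_andradePoly (n m : ℕ) (γ : ℝ) (z : ℂ) :
    (andradePoly n m γ).eval z = z ^ n + (γ * z ^ (n - m) + 1) := by
  simp [andradePoly]

theorem eval_derivative_andradePoly (hmn : m < n) (γ : ℝ) (z : ℂ) :
    (andradePoly n m γ).derivative.eval z =
      n * z ^ (n - 1) + γ * (n - m) * z ^ (n - m - 1) := by
  simp [andradePoly, derivative_X_pow, Nat.cast_sub hmn.le, mul_assoc]

theorem monic_andradePoly (hm : 0 < m) (hmn : m < n) (γ : ℝ) : (andradePoly n m γ).Monic :=
  monic_X_pow_add (degree_C_mul_X_pow_sub_add_one_lt (hm.trans hmn) hm (γ : ℂ))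

theorem natDegree_andradePoly (hm : 0 < m) (hmn : m < n) (γ : ℝ) :
    (andradePoly n m γ).natDegree = n := by
  refine natDegree_eq_of_degree_eq_some ?_
  rw [andradePoly, degree_add_eq_left_of_degree_lt, degree_X_pow]
  rw [degree_X_pow]
  exact degree_C_mul_X_pow_sub_add_one_lt (hm.trans hmn) hm (γ : ℂ)

theorem re_eval_andradePoly (n m : ℕ) (γ φ ρ : ℝ) :
    ((andradePoly n m γ).eval (Complex.exp (φ * Complex.I) * ρ)).re =
      ρ ^ n * Real.cos (n * φ) + (γ * (ρ ^ (n - m) * Real.cos ((n - m : ℕ) * φ)) + 1) := by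
  simp [eval_andradePoly, exp_mul_I_mul_ofReal_pow, -Complex.ofReal_mul, -Complex.ofReal_pow,
    -Complex.ofReal_cos, -Complex.ofReal_sin]

theorem im_eval_andradePoly (n m : ℕ) (γ φ ρ : ℝ) :
    ((andradePoly n m γ).eval (Complex.exp (φ * Complex.I) * ρ)).im =
      ρ ^ n * Real.sin (n * φ) + γ * (ρ ^ (n - m) * Real.sin ((n - m : ℕ) * φ)) := by
  simp [eval_andradePoly, exp_mul_I_mul_ofReal_pow, -Complex.ofReal_mul, -Complex.ofReal_pow,
    -Complex.ofReal_cos, -Complex.ofReal_sin]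

theorem im_eval_andradePoly_pos (hm : 0 < m) (hmn : m < n) (hγ : 0 < γ) {φ : ℝ} (hφ₀ : 0 < φ)
    (hφ : φ ≤ Real.pi / n) {ρ : ℝ} (hρ : 0 < ρ) :
    0 < ((andradePoly n m γ).eval (Complex.exp (φ * Complex.I) * ρ)).im := by
  have hn : (0 : ℝ) < n := by exact_mod_cast hm.trans hmn
  have hnφ : n * φ ≤ Real.pi := by rwa [le_div_iff₀' hn] at hφ
  have hsub : ((n - m : ℕ) : ℝ) * φ < n * φ :=
    mul_lt_mul_of_pos_right (by exact_mod_cast Nat.sub_lt (hm.trans hmn) hm) hφ₀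
  have hsub₀ : (0 : ℝ) < (n - m : ℕ) := by exact_mod_cast Nat.sub_pos_of_lt hmn
  have hsin := Real.sin_nonneg_of_nonneg_of_le_pi (by positivity) hnφ
  have hsin' := Real.sin_pos_of_pos_of_lt_pi (mul_pos hsub₀ hφ₀) (hsub.trans_le hnφ)
  rw [im_eval_andradePoly]
  positivity

theorem eval_andradePoly_ne_zero (hm : 0 < m) (hmn : m < n) (hγ : 0 < γ) {φ : ℝ}
    (hφ : |φ| ≤ Real.pi / n) {ρ : ℝ} (hρ : 0 ≤ ρ) :
    (andradePoly n m γ).eval (Complex.exp (φ * Complex.I) * ρ) ≠ 0 := by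
  intro hzero
  have hre := re_eval_andradePoly n m γ φ ρ
  have him := im_eval_andradePoly n m γ φ ρ
  rw [hzero] at hre him
  rcases hρ.eq_or_lt with rfl | hρ₀
  · simp [(hm.trans hmn).ne', (Nat.sub_pos_of_lt hmn).ne'] at hre
  rcases lt_trichotomy φ 0 with hφ₀ | rfl | hφ₀
  · have hpos := im_eval_andradePoly_pos hm hmn hγ (neg_pos.2 hφ₀) ((neg_le_abs φ).trans hφ) hρ₀
    rw [im_eval_andradePoly, mul_neg, mul_neg, Real.sin_neg, Real.sin_neg] at hpos
    simp only [Complex.zero_im] at him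
    linarith
  · simp only [mul_zero, Real.cos_zero, mul_one, Complex.zero_re] at hre
    exact absurd hre (ne_of_lt (by positivity))
  · have hpos := im_eval_andradePoly_pos hm hmn hγ hφ₀ ((le_abs_self φ).trans hφ) hρ₀
    rw [hzero] at hpos
    exact lt_irrefl _ hpos

theorem abs_pi_div_lt_abs_arg_of_isRoot (hm : 0 < m) (hmn : m < n) (hγ : 0 < γ) {z : ℂ}
    (hz : (andradePoly n m γ).IsRoot z) : |Real.pi / n| < |z.arg| := by
  by_contra! harg
  rw [abs_pi_div_natCast] at harg
  refine eval_andradePoly_ne_zero hm hmn hγ harg (norm_nonneg z) ?_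
  rw [mul_comm, Complex.norm_mul_exp_arg_mul_I]
  exact hz

theorem continuous_andradeSymbol (n m : ℕ) (γ : ℝ) : Continuous (andradeSymbol n m γ) := by
  unfold andradeSymbol
  fun_prop

theorem andradeSymbol_zero (hmn : m < n) (γ : ℝ) : andradeSymbol n m γ 0 = 1 := by
  simp [andradeSymbol, eval_andradePoly, (Nat.zero_lt_of_lt hmn).ne', (Nat.sub_pos_of_lt hmn).ne']

theorem exists_pos_forall_le_norm_andradeSymbol (hm : 0 < m) (hmn : m < n) (hγ : 0 < γ) :
    ∃ δ > 0, ∀ x, 0 ≤ x → δ ≤ ‖andradeSymbol n m γ x‖ := by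
  have hdegree : 0 < (andradePoly n m γ).degree :=
    natDegree_pos_iff_degree_pos.1 (by rw [natDegree_andradePoly hm hmn]; exact hm.trans hmn)
  have hbound (φ : ℝ) (hφ : |φ| ≤ Real.pi / n) :=
    exists_pos_forall_le_norm_eval_mul_ofReal hdegree (Complex.exp_ne_zero (φ * Complex.I))
      fun s hs => eval_andradePoly_ne_zero hm hmn hγ hφ hs
  obtain ⟨δ₁, hδ₁, h₁⟩ := hbound _ (abs_pi_div_natCast n).le
  obtain ⟨δ₂, hδ₂, h₂⟩ := hbound (-(Real.pi / n)) (by rw [abs_neg, abs_pi_div_natCast])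
  refine ⟨δ₁ * δ₂, mul_pos hδ₁ hδ₂, fun x hx => ?_⟩
  rw [andradeSymbol, norm_mul, ← Complex.ofReal_neg]
  exact mul_le_mul (h₁ x hx) (h₂ x hx) hδ₂.le (norm_nonneg _)

theorem eval_andradePoly_sub_eval_andradePoly (hmn : m < n) (γ x : ℝ) :
    (andradePoly n m γ).eval (Complex.exp ((Real.pi / n : ℝ) * Complex.I) * x) -
      (andradePoly n m γ).eval (Complex.exp (-(Real.pi / n : ℝ) * Complex.I) * x) =
      2 * (γ * Real.sin (m * (Real.pi / n)) * x ^ (n - m)) * Complex.I := by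
  have hn : (n : ℝ) ≠ 0 := by exact_mod_cast (Nat.zero_lt_of_lt hmn).ne'
  have hjump (k : ℕ) := exp_mul_I_pow_sub_exp_neg_mul_I_pow (Real.pi / n) k
  have hsin : Real.sin ((n - m : ℕ) * (Real.pi / n)) = Real.sin (m * (Real.pi / n)) := by
    rw [Nat.cast_sub hmn.le, sub_mul, mul_div_cancel₀ _ hn, Real.sin_pi_sub]
  have hn_jump := hjump n
  have hsub_jump := hjump (n - m)
  rw [mul_div_cancel₀ _ hn, Real.sin_pi, Complex.ofReal_zero] at hn_jump
  rw [hsin] at hsub_jump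
  simp only [eval_andradePoly, mul_pow]
  linear_combination (x : ℂ) ^ n * hn_jump + γ * x ^ (n - m) * hsub_jump

variable {ι : Type*} [Fintype ι] {r : ι → ℂ}

theorem sin_mul_sum_inv_sectorQuadratic_div_eval_derivative (hm : 0 < m) (hmn : m < n)
    (hγ : 0 < γ) (hcard : Fintype.card ι = n) (hr : Function.Injective r)
    (hroot : ∀ k, (andradePoly n m γ).IsRoot (r k)) {x : ℝ} (hx : 0 < x) :
    Real.sin (Real.pi / n) * ∑ k, (sectorQuadratic (Real.pi / n) (r k) x)⁻¹ /
        (andradePoly n m γ).derivative.eval (r k) =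
      γ * Real.sin (m * (Real.pi / n)) * x ^ (n - m - 1) * (andradeSymbol n m γ x)⁻¹ := by
  have hn : n ≠ 0 := (hm.trans hmn).ne'
  have : Nonempty ι := Fintype.card_pos_iff.1 (hcard ▸ hm.trans hmn)
  have hn₁ : (1 : ℝ) < n := by exact_mod_cast (Nat.succ_le_of_lt hm).trans_lt hmn
  have hsin : (Real.sin (Real.pi / n) : ℂ) ≠ 0 := by
    exact_mod_cast (Real.sin_pos_of_pos_of_lt_pi (by positivity)
      (div_lt_self Real.pi_pos hn₁)).ne'
  have hx' : (x : ℂ) ≠ 0 := by exact_mod_cast hx.ne'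
  have hroots (k : ι) := mul_ne_zero_iff.1 <|
    sectorQuadratic_ne_zero (abs_pi_div_lt_abs_arg_of_isRoot hm hmn hγ (hroot k)) hx.le
  have hpos := eval_andradePoly_ne_zero hm hmn hγ (abs_pi_div_natCast n).le hx.le
  have hneg := eval_andradePoly_ne_zero hm hmn hγ (φ := -(Real.pi / n))
    (by rw [abs_neg, abs_pi_div_natCast]) hx.le
  have hjump := eval_andradePoly_sub_eval_andradePoly hmn γ x
  have hsub : Complex.exp ((Real.pi / n : ℝ) * Complex.I) * x -
      Complex.exp (-(Real.pi / n : ℝ) * Complex.I) * x =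
        2 * Real.sin (Real.pi / n) * Complex.I * x := by
    simpa [← sub_mul] using
      congrArg (· * (x : ℂ)) (exp_mul_I_pow_sub_exp_neg_mul_I_pow (Real.pi / n) 1)
  have hne : 2 * Real.sin (Real.pi / n) * Complex.I * x ≠ 0 :=
    mul_ne_zero (mul_ne_zero (mul_ne_zero two_ne_zero hsin) Complex.I_ne_zero) hx'
  rw [Complex.ofReal_neg] at hneg
  simp only [sectorQuadratic]
  rw [sum_inv_sub_mul_sub_div_eval_derivative (monic_andradePoly hm hmn γ)
    ((natDegree_andradePoly hm hmn γ).trans hcard.symm) hr hroot (sub_ne_zero.1 (hsub ▸ hne))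
    (fun k => sub_ne_zero.1 (hroots k).1) (fun k => sub_ne_zero.1 (hroots k).2),
    hsub, inv_sub_inv hneg hpos, hjump, andradeSymbol,
    ← mul_pow_sub_one (Nat.sub_pos_of_lt hmn).ne']
  field_simp

theorem pow_mul_sin_mul_sum_inv_sectorQuadratic_mul_ofReal (hm : 0 < m) (hmn : m < n)
    (hγ : 0 < γ) (hcard : Fintype.card ι = n) (hr : Function.Injective r)
    (hroot : ∀ k, (andradePoly n m γ).IsRoot (r k)) {S s : ℝ} (hS : 0 < S) (hs : 0 < s) :
    S ^ (n - m + 1) * (Real.sin (Real.pi / n) *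
        ∑ k, (sectorQuadratic (Real.pi / n) (r k * S) s)⁻¹ /
          (andradePoly n m γ).derivative.eval (r k)) =
      γ * Real.sin (m * (Real.pi / n)) * s ^ (n - m - 1) * (andradeSymbol n m γ (s / S))⁻¹ := by
  have hexp : n - m + 1 = n - m - 1 + 2 := by omega
  have hS' : (S : ℂ) ≠ 0 := by exact_mod_cast hS.ne'
  simp_rw [sectorQuadratic_mul_ofReal _ _ hS.ne', mul_inv, mul_div_assoc, ← Finset.mul_sum]
  rw [mul_left_comm (Real.sin _ : ℂ), sin_mul_sum_inv_sectorQuadratic_div_eval_derivative hm hmn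
    hγ hcard hr hroot (div_pos hs hS), hexp, pow_add, Complex.ofReal_div, div_pow]
  field_simp

theorem pow_mul_sum_mittagLeffler_div_eval_derivative (hm : 0 < m) (hmn : m < n) (hγ : 0 < γ)
    (hcard : Fintype.card ι = n) (hr : Function.Injective r)
    (hroot : ∀ k, (andradePoly n m γ).IsRoot (r k)) {S : ℝ} (hS : 0 < S) :
    S ^ (n - m + 1) * ∑ k, mittagLeffler (1 / n) (1 / n) (r k * S) /
        (andradePoly n m γ).derivative.eval (r k) =
      n * γ * Real.sin (m * (Real.pi / n)) / Real.pi *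
        ∫ s : ℝ in Set.Ioi 0, (s ^ (n + (n - m - 1)) * Real.exp (-1 * s ^ n) : ℝ) *
          (andradeSymbol n m γ (s / S))⁻¹ := by
  have hn : n ≠ 0 := (hm.trans hmn).ne'
  have harg (k : ι) : |Real.pi / n| < |(r k * S).arg| := by
    rw [mul_comm, Complex.arg_real_mul _ hS]
    exact abs_pi_div_lt_abs_arg_of_isRoot hm hmn hγ (hroot k)
  have hintegrable (k : ι) := integrable_mul_exp_neg_mul_mul
    (integrableOn_inv_sectorQuadratic (harg k)) (by fun_prop) (ae_Ioi_zero_pow_nonneg n) one_pos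
  simp only [Complex.ofReal_pow] at hintegrable
  simp_rw [fun k => mittagLeffler_inv_self_eq_sectorMoment hn (harg k), sectorMoment,
    ← integral_const_mul, ← integral_div]
  rw [← integral_finsetSum _ fun k _ => ((hintegrable k).const_mul _).div_const _,
    ← integral_const_mul]
  refine setIntegral_congr_fun measurableSet_Ioi fun s hs => ?_
  calc S ^ (n - m + 1) * ∑ k, n * Real.sin (Real.pi / n) / Real.pi *
          (s ^ n * (Real.exp (-1 * s ^ n) : ℂ) *
            (sectorQuadratic (Real.pi / n) (r k * S) s)⁻¹) /
              (andradePoly n m γ).derivative.eval (r k)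
      = n / Real.pi * s ^ n * (Real.exp (-1 * s ^ n) : ℂ) * (S ^ (n - m + 1) *
          (Real.sin (Real.pi / n) * ∑ k, (sectorQuadratic (Real.pi / n) (r k * S) s)⁻¹ /
            (andradePoly n m γ).derivative.eval (r k))) := by
        simp_rw [Finset.mul_sum]
        exact Finset.sum_congr rfl fun k _ => by ring
    _ = _ := by
        rw [pow_mul_sin_mul_sum_inv_sectorQuadratic_mul_ofReal hm hmn hγ hcard hr hroot hS hs]
        push_cast
        ring

theorem tendsto_pow_mul_sum_mittagLeffler_div_eval_derivative (hm : 0 < m) (hmn : m < n)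
    (hγ : 0 < γ) (hcard : Fintype.card ι = n) (hr : Function.Injective r)
    (hroot : ∀ k, (andradePoly n m γ).IsRoot (r k)) :
    Tendsto (fun S : ℝ => S ^ (n - m + 1) * ∑ k, mittagLeffler (1 / n) (1 / n) (r k * S) /
        (andradePoly n m γ).derivative.eval (r k)) atTop
      (𝓝 (γ * (Real.sin (m / n * Real.pi) / Real.pi * Real.Gamma (2 - m / n)) : ℝ)) := by
  obtain ⟨δ, hδ, hbound⟩ := exists_pos_forall_le_norm_andradeSymbol hm hmn hγ
  have hn : n ≠ 0 := (hm.trans hmn).ne'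
  have hn' : (n : ℝ) ≠ 0 := by exact_mod_cast hn
  have hexp : ((n + (n - m - 1) : ℕ) + 1 : ℝ) / n = 2 - m / n := by
    rw [div_eq_iff hn', sub_mul, div_mul_cancel₀ _ hn', ← Nat.cast_add_one,
      eq_sub_iff_add_eq]
    exact_mod_cast (by omega : n + (n - m - 1) + 1 + m = 2 * n)
  have hne (x : ℝ) (hx : 0 ≤ x) : andradeSymbol n m γ x ≠ 0 :=
    norm_pos_iff.1 (hδ.trans_le (hbound x hx))
  have hintegrable : IntegrableOn (fun s : ℝ =>
      ((s ^ (n + (n - m - 1)) * Real.exp (-1 * s ^ n) : ℝ) : ℂ)) (Set.Ioi 0) :=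
    (integrableOn_pow_mul_exp_neg_mul_pow hn _ one_pos).ofReal
  have hlim := (tendsto_integral_mul_comp_div_atTop hintegrable
    ((continuous_andradeSymbol n m γ).continuousOn.inv₀ hne) (C := δ⁻¹) fun x hx => by
      rw [Pi.inv_apply, norm_inv]
      exact inv_anti₀ hδ (hbound x hx)).const_mul
        (n * γ * Real.sin (m * (Real.pi / n)) / Real.pi : ℂ)
  rw [integral_complex_ofReal, integral_pow_mul_exp_neg_one_mul_pow hn, Pi.inv_apply,
    andradeSymbol_zero hmn, hexp] at hlim
  have hconst : (n * γ * Real.sin (m * (Real.pi / n)) / Real.pi : ℂ) *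
      ((Real.Gamma (2 - m / n) / n : ℝ) * 1⁻¹) =
      (γ * (Real.sin (m / n * Real.pi) / Real.pi * Real.Gamma (2 - m / n)) : ℝ) := by
    rw [← mul_div_assoc, div_mul_eq_mul_div (m : ℝ)]
    push_cast
    field_simp
  rw [hconst] at hlim
  refine hlim.congr' ?_
  filter_upwards [eventually_gt_atTop 0] with S hS using
    (pow_mul_sum_mittagLeffler_div_eval_derivative hm hmn hγ hcard hr hroot hS).symm

end Andrade

theorem rpow_two_sub_div_mul_rpow_one_div_sub_one {m n : ℕ} (hmn : m < n) {x : ℝ} (hx : 0 < x) :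
    x ^ (2 - (m : ℝ) / n) * x ^ ((1 : ℝ) / n - 1) = (x ^ ((1 : ℝ) / n)) ^ (n - m + 1) := by
  have hn : (n : ℝ) ≠ 0 := by exact_mod_cast (Nat.zero_lt_of_lt hmn).ne'
  rw [← Real.rpow_add hx, ← Real.rpow_mul_natCast hx.le, Nat.cast_add_one, Nat.cast_sub hmn.le]
  congr 1
  field_simp
  ring

end

/-- **Asymptotic behaviour of the Andrade relaxation modulus as `t → +∞`**:
with `α = m/n`, `(t/τ)^{2−α} G_{m/n}(t) → μα(1−α)` as `t → +∞`, i.e.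
`G_{m/n}(t) ≈ μα(1−α)(t/τ)^{α−2}` as `t → +∞`. -/
theorem andrade_relaxation_modulus_asymptotic_infty (m n : ℕ) (hm : 0 < m) (hmn : m < n)
    (μ τ : ℝ) (hμ : 0 < μ) (hτ : 0 < τ)
    (r : Fin n → ℂ) (hr : Function.Injective r)
    (hroot : ∀ k, r k ^ n + (Real.Gamma (1 + (m : ℝ) / n) : ℂ) * r k ^ (n - m) + 1 = 0)
    (G : ℝ → ℂ)
    (hG : ∀ t : ℝ, 0 < t → G t =
      (μ : ℂ) * (((t / τ) ^ ((1 : ℝ) / n - 1) : ℝ) : ℂ) *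
        ∑ k, mittagLeffler ((1 : ℝ) / n) ((1 : ℝ) / n)
            (r k * (((t / τ) ^ ((1 : ℝ) / n) : ℝ) : ℂ)) /
          ((n : ℂ) * r k ^ (n - 1) +
            (Real.Gamma (1 + (m : ℝ) / n) : ℂ) * ((n : ℂ) - m) * r k ^ (n - m - 1))) :
    Filter.Tendsto
      (fun t : ℝ => (((t / τ) ^ (2 - (m : ℝ) / n) : ℝ) : ℂ) * G t)
      Filter.atTop
      (nhds ((μ * ((m : ℝ) / n) * (1 - (m : ℝ) / n) : ℝ) : ℂ)) := by
  have hn : (0 : ℝ) < n := by exact_mod_cast hm.trans hmn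
  have hα₀ : (0 : ℝ) < m / n := div_pos (by exact_mod_cast hm) hn
  have hα₁ : (m : ℝ) / n < 1 := (div_lt_one hn).2 (by exact_mod_cast hmn)
  have hγ : 0 < Real.Gamma (1 + (m : ℝ) / n) := Real.Gamma_pos_of_pos (by positivity)
  have hroot' (k : Fin n) : (andradePoly n m (Real.Gamma (1 + (m : ℝ) / n))).IsRoot (r k) := by
    rw [Polynomial.IsRoot.def, eval_andradePoly, ← add_assoc, hroot k]
  have hS : Tendsto (fun t : ℝ => (t / τ) ^ ((1 : ℝ) / n)) atTop atTop :=
    (tendsto_rpow_atTop (one_div_pos.2 hn)).comp (tendsto_id.atTop_div_const hτ)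
  have hlim := ((tendsto_pow_mul_sum_mittagLeffler_div_eval_derivative hm hmn hγ
    (Fintype.card_fin n) hr hroot').comp hS).const_mul (μ : ℂ)
  rw [Gamma_one_add_mul_sin_div_pi_mul_Gamma_two_sub hα₀ hα₁, ← Complex.ofReal_mul,
    ← mul_assoc] at hlim
  refine hlim.congr' ?_
  filter_upwards [eventually_gt_atTop 0] with t ht
  have hpow := congrArg Complex.ofReal
    (rpow_two_sub_div_mul_rpow_one_div_sub_one hmn (div_pos ht hτ))
  rw [Complex.ofReal_mul, Complex.ofReal_pow] at hpow
  simp only [Function.comp_apply, hG t ht, ← hpow, eval_derivative_andradePoly hmn]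
  ring
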